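/- Let $M > 0$, $\lambda \geq 1$ an integer, $\Delta(r) = r^2 - 2Mr$, and define $q(r) = (3M - r)/\sqrt{\Delta(r)}$ for $r > 2M$. Then $q$ is strictly decreasing on $(3M/2, \infty)$ and $q(r) > -1$ for all $r \geq 3M/2$. -/

import Mathlib

/-! Write `Δ(r) = r² - 2Mr`. Since `Δ(r) - (r - 3M)² = M(4r - 9M)`, squaring gives
`r - 3M < √Δ(r)` on the exterior region, which is the lower bound `q > -1`.

For monotonicity, take `2M < a < b` and cross-multiply. When `b < 3M` the positive numerator
decreases while `Δ` increases; when `a < 3M ≤ b` the values have different signs. When `3M ≤ a`,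
squaring reduces the claim to the identity, with `x = a - 3M` and `y = b - 3M`,
`y² Δ(a) - x² Δ(b) = 4Mxy(y - x) + 3M²(y² - x²)`, whose right side is positive. -/

/-- With `Δ(r) = r² - 2Mr` and `q(r) = (3M - r)/√(Δ(r))` on the exterior region `r > 2M`,
the function `q` is strictly decreasing for `r > 3M/2` (hence on the whole domain `r > 2M`),
and `q(r) > -1` for all `r ≥ 3M/2`. -/
theorem q_strictAnti_and_gt_neg_one (M : ℝ) (hM : 0 < M) (lam : ℕ) (hlam : 1 ≤ lam) :
    let q : ℝ → ℝ := fun r => (3*M - r) / Real.sqrt (r^2 - 2*M*r)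
    StrictAntiOn q (Set.Ioi (2*M)) ∧ ∀ r ≥ 3*M/2, q r > -1 := by
  intro q
  refine ⟨?_, ?_⟩
  · intro a ha b hb hab
    simp only [Set.mem_Ioi] at ha hb
    have hA : 0 < a^2 - 2*M*a := by nlinarith
    have hB : 0 < b^2 - 2*M*b := by nlinarith
    have hAB : a^2 - 2*M*a < b^2 - 2*M*b := by nlinarith
    have sA := Real.sqrt_pos.2 hA
    have sB := Real.sqrt_pos.2 hB
    have sAB := Real.sqrt_lt_sqrt hA.le hAB
    change (3*M - b) / √(b^2 - 2*M*b) < (3*M - a) / √(a^2 - 2*M*a)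
    rw [div_lt_div_iff₀ sB sA]
    rcases lt_or_ge b (3*M) with hb3 | hb3
    · exact mul_lt_mul'' (by linarith) sAB (by linarith) sA.le
    rcases lt_or_ge a (3*M) with ha3 | ha3
    · have h₁ : (3*M - b) * √(a^2 - 2*M*a) ≤ 0 :=
        mul_nonpos_of_nonpos_of_nonneg (by linarith) sA.le
      have h₂ : 0 < (3*M - a) * √(b^2 - 2*M*b) := mul_pos (by linarith) sB
      linarith
    · have key : (a - 3*M) * √(b^2 - 2*M*b) < (b - 3*M) * √(a^2 - 2*M*a) := by
        refine lt_of_pow_lt_pow_left₀ 2 (mul_nonneg (by linarith) sA.le) ?_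
        rw [mul_pow, mul_pow, Real.sq_sqrt hA.le, Real.sq_sqrt hB.le]
        have hx : 0 ≤ a - 3*M := by linarith
        have hy : 0 ≤ b - 3*M := by linarith
        have hyx : 0 < b - a := by linarith
        have h₁ : 0 ≤ 4*M*((a - 3*M)*(b - 3*M))*(b - a) := by positivity
        have h₂ : 0 < 3*M^2*((b - a)*((a - 3*M) + (b - 3*M))) := by
          have : 0 < (a - 3*M) + (b - 3*M) := by linarith
          positivity
        linarith
      linarith
  · intro r hr
    change (3*M - r) / √(r^2 - 2*M*r) > -1
    rcases le_or_gt r (2*M) with h | h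
    · -- Here `Δ(r) ≤ 0`, so the square root and hence the quotient are `0` by convention.
      rw [Real.sqrt_eq_zero_of_nonpos (by nlinarith)]
      norm_num
    · have hΔ : 0 < r^2 - 2*M*r := by nlinarith
      have key : r - 3*M < √(r^2 - 2*M*r) := by
        rcases lt_or_ge r (3*M) with h3 | h3
        · linarith [Real.sqrt_pos.2 hΔ]
        · exact Real.lt_sqrt_of_sq_lt (by nlinarith)
      rw [gt_iff_lt, lt_div_iff₀ (Real.sqrt_pos.2 hΔ)]
      linarith
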